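/- Let P and Q be probability measures on X such that φ is Bochner integrable with respect to both, with mean embeddings μ_P := ∫ φ dP and μ_Q := ∫ φ dQ satisfying μ_P ≠ μ_Q. Fix x ∈ X, and for ε ∈ [0,1) let Q_ε := (1−ε)Q + εδ_x, whose mean embedding equals (1−ε)μ_Q + εφ(x). Then the one-sided limit defining the distributional influence IF_MMD(x; P, Q) := −lim_{ε→0⁺} (MMD(P, Q_ε) − MMD(P, Q))/ε exists and equals (⟨μ_P, φ(x)⟩ − ⟨μ_Q, φ(x)⟩ − ⟨μ_P, μ_Q⟩ + ‖μ_Q‖²)/‖μ_P − μ_Q‖. In particular, since ⟨μ_P, φ(x)⟩ = ∫ k(x', x) dP(x') and ⟨μ_Q, φ(x)⟩ = ∫ k(x', x) dQ(x'), the influence equals, up to an additive constant independent of x and division by the positive constant MMD(P, Q), the quantity E_{x'∼P}[k(x', x)] − E_{x'∼Q}[k(x', x)]. -/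

import Mathlib

open MeasureTheory Filter Topology
open scoped ENNReal RealInnerProductSpace

/-!
The mean embedding is affine in the measure, so `Q_ε` moves the embedding of `Q` along the segment
from `μ_Q` to `φ x`. The MMD is therefore the norm of an affine path, and this norm is
differentiable at `ε = 0` because the path starts at `μ_P - μ_Q ≠ 0`.
-/

theorem hasDerivAt_norm_comp {E : Type*} [NormedAddCommGroup E] [InnerProductSpace ℝ E]
    {f : ℝ → E} {f' : E} {t : ℝ} (hf : HasDerivAt f f' t) (hft : f t ≠ 0) :
    HasDerivAt (fun s => ‖f s‖) (⟪f t, f'⟫ / ‖f t‖) t := by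
  have hsqrt : HasDerivAt (fun s => √(‖f s‖ ^ 2)) (2 * ⟪f t, f'⟫ / (2 * √(‖f t‖ ^ 2))) t :=
    hf.norm_sq.sqrt (pow_ne_zero 2 (norm_ne_zero_iff.mpr hft))
  simpa only [Real.sqrt_sq (norm_nonneg _), mul_div_mul_left _ _ (two_ne_zero' ℝ)] using hsqrt

theorem hasDerivAt_norm_sub_lineMap_zero {E : Type*} [NormedAddCommGroup E]
    [InnerProductSpace ℝ E] {p q : E} (hpq : p ≠ q) (z : E) :
    HasDerivAt (fun t : ℝ => ‖p - AffineMap.lineMap q z t‖) (-(⟪p - q, z - q⟫ / ‖p - q‖)) 0 := by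
  have hpath : HasDerivAt (fun t : ℝ => p - AffineMap.lineMap q z t) (-(z - q)) 0 :=
    AffineMap.hasDerivAt_lineMap.const_sub p
  simpa only [AffineMap.lineMap_apply_zero, inner_neg_right, neg_div] using
    hasDerivAt_norm_comp hpath (by simpa [sub_eq_zero] using hpq)

theorem inner_integral_left {α 𝕜 E : Type*} [MeasurableSpace α] [RCLike 𝕜]
    [NormedAddCommGroup E] [InnerProductSpace 𝕜 E] [NormedSpace ℝ E] [CompleteSpace E]
    {μ : Measure α} {f : α → E} (hf : Integrable f μ) (c : E) :
    inner 𝕜 (∫ a, f a ∂μ) c = ∫ a, inner 𝕜 (f a) c ∂μ := by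
  rw [← inner_conj_symm, ← integral_inner hf, ← integral_conj]
  simp only [inner_conj_symm]

section DiracMixture

variable {α E : Type*} [MeasurableSpace α] [NormedAddCommGroup E] [MeasurableSpace E]
  [MeasurableSingletonClass E] {f : α → E}

-- The range of `f` may be nonseparable, so `f` need not be strongly measurable: what makes `f`
-- almost everywhere constant under `dirac a` is the measurability of the preimage of `{f a}`.
theorem integrable_dirac_of_measurable (hf : Measurable f) (a : α) :
    Integrable f (Measure.dirac a) :=
  (integrable_const (f a)).congr (ae_eq_dirac' hf).symm

variable [NormedSpace ℝ E] [CompleteSpace E]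

theorem integral_dirac_of_measurable (hf : Measurable f) (a : α) :
    ∫ y, f y ∂Measure.dirac a = f a := by
  rw [integral_congr_ae (ae_eq_dirac' hf)]
  simp

theorem integral_smul_add_smul_dirac {μ : Measure α} (hf : Measurable f) (hfμ : Integrable f μ)
    (a : α) {s t : ℝ} (hs : 0 ≤ s) (ht : 0 ≤ t) :
    ∫ y, f y ∂(ENNReal.ofReal s • μ + ENNReal.ofReal t • Measure.dirac a) =
      s • ∫ y, f y ∂μ + t • f a := by
  rw [integral_add_measure (hfμ.smul_measure ENNReal.ofReal_ne_top)
      ((integrable_dirac_of_measurable hf a).smul_measure ENNReal.ofReal_ne_top),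
    integral_smul_measure, integral_smul_measure, integral_dirac_of_measurable hf,
    ENNReal.toReal_ofReal hs, ENNReal.toReal_ofReal ht]

end DiracMixture

theorem mmd_influence_closed_form_general
    {X : Type*} [MeasurableSpace X]
    {H : Type*} [NormedAddCommGroup H] [InnerProductSpace ℝ H] [CompleteSpace H]
    [MeasurableSpace H] [MeasurableSingletonClass H]
    {φ : X → H} (hφ : Measurable φ) {P Q : Measure X}
    (hPint : Integrable φ P) (hQint : Integrable φ Q)
    {μP μQ : H} (hμP : μP = ∫ x', φ x' ∂P) (hμQ : μQ = ∫ x', φ x' ∂Q)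
    (hne : μP ≠ μQ) (x : X) {Qe : ℝ → Measure X}
    (hQe : ∀ ε ∈ Set.Ico (0 : ℝ) 1,
      Qe ε = ENNReal.ofReal (1 - ε) • Q + ENNReal.ofReal ε • Measure.dirac x) :
    (Tendsto
      (fun ε : ℝ =>
        -((‖(∫ x', φ x' ∂P) - ∫ x', φ x' ∂(Qe ε)‖ - ‖μP - μQ‖) / ε))
      (𝓝[>] (0 : ℝ))
      (𝓝 ((⟪μP, φ x⟫ - ⟪μQ, φ x⟫ - ⟪μP, μQ⟫ + ‖μQ‖ ^ 2) / ‖μP - μQ‖)))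
    ∧ ⟪μP, φ x⟫ = ∫ x', ⟪φ x', φ x⟫ ∂P
    ∧ ⟪μQ, φ x⟫ = ∫ x', ⟪φ x', φ x⟫ ∂Q := by
  refine ⟨?_, hμP ▸ inner_integral_left hPint _, hμQ ▸ inner_integral_left hQint _⟩
  have hemb : ∀ ε ∈ Set.Ioo (0 : ℝ) 1, ∫ x', φ x' ∂(Qe ε) = AffineMap.lineMap μQ (φ x) ε := by
    intro ε ⟨hε0, hε1⟩
    rw [hQe ε ⟨hε0.le, hε1⟩,
      integral_smul_add_smul_dirac hφ hQint x (sub_nonneg.mpr hε1.le) hε0.le, ← hμQ,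
      AffineMap.lineMap_apply_module]
  have hexpand : ⟪μP - μQ, φ x - μQ⟫ = ⟪μP, φ x⟫ - ⟪μQ, φ x⟫ - ⟪μP, μQ⟫ + ‖μQ‖ ^ 2 := by
    rw [inner_sub_left, inner_sub_right, inner_sub_right, real_inner_self_eq_norm_sq]
    ring
  have hslope := (hasDerivAt_norm_sub_lineMap_zero hne (φ x)).tendsto_slope_zero_right.neg
  rw [neg_neg, hexpand] at hslope
  refine hslope.congr' ?_
  filter_upwards [Ioo_mem_nhdsGT (zero_lt_one' ℝ)] with ε hε
  rw [← hμP, hemb ε hε, zero_add, AffineMap.lineMap_apply_zero, smul_eq_mul, div_eq_inv_mul]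

/-- The one-sided limit defining the distributional influence for MMD exists
and has the stated closed form, which up to constants equals the kernel expectation gap. -/
theorem mmd_influence_closed_form
    {X : Type*} [MeasurableSpace X]
    {H : Type*} [NormedAddCommGroup H] [InnerProductSpace ℝ H] [CompleteSpace H]
    [MeasurableSpace H] [BorelSpace H]
    (φ : X → H) (hφ : Measurable φ) (C : ℝ) (hC : ∀ x, ‖φ x‖ ≤ C)
    (P Q : Measure X) [IsProbabilityMeasure P] [IsProbabilityMeasure Q]
    (hPint : Integrable φ P) (hQint : Integrable φ Q)
    (μP μQ : H) (hμP : μP = ∫ x', φ x' ∂P) (hμQ : μQ = ∫ x', φ x' ∂Q)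
    (hne : μP ≠ μQ) (x : X)
    (Qe : ℝ → Measure X)
    (hQe : ∀ ε ∈ Set.Ico (0 : ℝ) 1,
      Qe ε = ENNReal.ofReal (1 - ε) • Q + ENNReal.ofReal ε • Measure.dirac x)
    (hQeEmb : ∀ ε ∈ Set.Ico (0 : ℝ) 1,
      (∫ x', φ x' ∂(Qe ε)) = (1 - ε) • μQ + ε • φ x) :
    (Tendsto
      (fun ε : ℝ =>
        -((‖(∫ x', φ x' ∂P) - ∫ x', φ x' ∂(Qe ε)‖ - ‖μP - μQ‖) / ε))
      (𝓝[>] (0 : ℝ))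
      (𝓝 ((⟪μP, φ x⟫ - ⟪μQ, φ x⟫ - ⟪μP, μQ⟫ + ‖μQ‖ ^ 2) / ‖μP - μQ‖)))
    ∧ ⟪μP, φ x⟫ = ∫ x', ⟪φ x', φ x⟫ ∂P
    ∧ ⟪μQ, φ x⟫ = ∫ x', ⟪φ x', φ x⟫ ∂Q :=
  mmd_influence_closed_form_general hφ hPint hQint hμP hμQ hne x hQe
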